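/- Let G be an ample groupoid. For every n ≥ −1 (with the convention EG_{−1} := G^0), the map f ⊗ a ↦ ((g_0,…,g_{n+1}) ↦ f(g_0) a(g_0^{−1}g_1,…,g_0^{−1}g_{n+1})) is a well-defined isomorphism of left Z[G]-modules Z[G] ⊗_{Z[G^0]} Z[EG_n] ≅ Z[EG_{n+1}]. -/

import Mathlib

noncomputable section

open Function Set

attribute [local instance] Classical.propDecidable

universe u v w

/-- `ℤ[Y]`: the set of compactly supported continuous `ℤ`-valued functions on a space `Y`
(`ℤ` carries the discrete topology). -/
def ccZ (Y : Type v) [TopologicalSpace Y] : Set (Y → ℤ) :=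
  {f | Continuous f ∧ HasCompactSupport f}

/-- `ℤ[Y]` as an additive subgroup of the group of all functions `Y → ℤ`. -/
def ccZSub (Y : Type v) [TopologicalSpace Y] : AddSubgroup (Y → ℤ) where
  carrier := ccZ Y
  add_mem' {a b} ha hb := ⟨ha.1.add hb.1, ha.2.add hb.2⟩
  zero_mem' := ⟨continuous_const, by
    have h : tsupport (0 : Y → ℤ) = ∅ := by simp [tsupport]
    unfold HasCompactSupport
    rw [h]; exact isCompact_empty⟩
  neg_mem' {a} ha := ⟨ha.1.neg, ha.2.neg⟩

@[simp] lemma mem_ccZSub {Y : Type v} [TopologicalSpace Y] (f : Y → ℤ) :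
    f ∈ ccZSub Y ↔ f ∈ ccZ Y := Iff.rfl

/-- The pushforward `φ_*(a)(y) = ∑_{x ∈ φ⁻¹(y)} a x` of a function along a map. -/
def pushf {X : Type v} {Y : Type w} (φ : X → Y) (a : X → ℤ) : Y → ℤ :=
  fun y => ∑ᶠ x ∈ φ ⁻¹' {y}, a x

/-- The generated equivalence relation. -/
inductive RelGen {α : Sort*} (r : α → α → Prop) : α → α → Prop
  | rel {x y} : r x y → RelGen r x y
  | refl (x) : RelGen r x x
  | symm {x y} : RelGen r x y → RelGen r y x
  | trans {x y z} : RelGen r x y → RelGen r y z → RelGen r x z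

/-- The purely algebraic data of a topological groupoid, with arrow space `G`:
the set of units, source and range maps (valued in units), a (junk-total)
partially defined composition, and inversion. -/
structure GroupoidData (G : Type u) where
  unitSpace : Set G
  source : G → G
  range : G → G
  mul : G → G → G
  inv : G → G

namespace GroupoidData

variable {G : Type u} (D : GroupoidData G)

/-- The product of two subsets of a groupoid. -/
def setMul (A B : Set G) : Set G :=
  {w | ∃ a ∈ A, ∃ b ∈ B, D.source a = D.range b ∧ w = D.mul a b}

/-- A bisection: a subset on which both the source and the range map are injective. -/
def IsBisection (B : Set G) : Prop := Set.InjOn D.source B ∧ Set.InjOn D.range B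

/-- Membership in the subgroupoid generated by a subset `A` of `G`. -/
inductive InSubgroupoid (A : Set G) : G → Prop
  | base {g} : g ∈ A → InSubgroupoid A g
  | inv {g} : InSubgroupoid A g → InSubgroupoid A (D.inv g)
  | mul {g h} : InSubgroupoid A g → InSubgroupoid A h → D.source g = D.range h →
      InSubgroupoid A (D.mul g h)

/-- `G` is a (locally compact, Hausdorff, étale) ample groupoid: all the algebraic groupoid
axioms hold, the structure maps are suitably continuous, the source and range maps are local
homeomorphisms onto the open unit space (étaleness), and the compact open bisections form a
basis for the topology (ampleness). -/
structure IsAmpleGroupoid [TopologicalSpace G] : Prop where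
  t2 : T2Space G
  locallyCompact : LocallyCompactSpace G
  source_mem : ∀ g, D.source g ∈ D.unitSpace
  range_mem : ∀ g, D.range g ∈ D.unitSpace
  source_unit : ∀ x ∈ D.unitSpace, D.source x = x
  range_unit : ∀ x ∈ D.unitSpace, D.range x = x
  source_mul : ∀ g h, D.source g = D.range h → D.source (D.mul g h) = D.source h
  range_mul : ∀ g h, D.source g = D.range h → D.range (D.mul g h) = D.range g
  mul_assoc : ∀ g h k, D.source g = D.range h → D.source h = D.range k →
      D.mul (D.mul g h) k = D.mul g (D.mul h k)
  source_inv : ∀ g, D.source (D.inv g) = D.range g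
  range_inv : ∀ g, D.range (D.inv g) = D.source g
  inv_mul : ∀ g, D.mul (D.inv g) g = D.source g
  mul_inv : ∀ g, D.mul g (D.inv g) = D.range g
  unit_mul : ∀ g, D.mul (D.range g) g = g
  mul_unit : ∀ g, D.mul g (D.source g) = g
  continuous_inv : Continuous D.inv
  continuous_mul : Continuous fun p : {p : G × G // D.source p.1 = D.range p.2} =>
      D.mul p.1.1 p.1.2
  open_unitSpace : IsOpen D.unitSpace
  etale_source : IsLocalHomeomorph D.source
  etale_range : IsLocalHomeomorph D.range
  ample : ∀ g : G, ∀ U : Set G, IsOpen U → g ∈ U →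
      ∃ B : Set G, g ∈ B ∧ B ⊆ U ∧ IsOpen B ∧ IsCompact B ∧ D.IsBisection B

/-- A groupoid is principal if every arrow with equal range and source is a unit. -/
def IsPrincipal : Prop := ∀ g, D.source g = D.range g → g ∈ D.unitSpace

/-- `G` has dynamic asymptotic dimension at most `d`: for every relatively compact open
subset `K` of `G` there are `d+1` open subsets of the unit space covering `r(K) ∪ s(K)` such
that the subgroupoid generated by the elements of `K` with source and range in one of these
sets is relatively compact. -/
def DadLE [TopologicalSpace G] (d : ℕ) : Prop :=
  ∀ K : Set G, IsOpen K → IsCompact (closure K) →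
    ∃ U : Fin (d + 1) → Set G,
      (∀ i, IsOpen (U i) ∧ U i ⊆ D.unitSpace) ∧
      (D.range '' K ∪ D.source '' K ⊆ ⋃ i, U i) ∧
      ∀ i, IsCompact (closure
        {g | D.InSubgroupoid {g ∈ K | D.source g ∈ U i ∧ D.range g ∈ U i} g})

/-! ### Matui's complex computing the Crainic–Moerdijk groupoid homology `H_*(G)` -/

/-- The space `G^(n)` of composable `n`-tuples. -/
def Comps (n : ℕ) : Set (Fin n → G) :=
  {v | ∀ (j : Fin n) (h : (j : ℕ) + 1 < n), D.source (v j) = D.range (v ⟨(j : ℕ) + 1, h⟩)}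

/-- The face maps of Matui's complex on tuples:
`d_0` drops the first entry, `d_{n+1}` drops the last one, and the intermediate
`d_i` compose two consecutive entries. -/
def dface (n : ℕ) (i : Fin (n + 2)) (v : Fin (n + 1) → G) : Fin n → G := fun j =>
  if (j : ℕ) + 1 < (i : ℕ) then v j.castSucc
  else if (j : ℕ) + 1 = (i : ℕ) then D.mul (v j.castSucc) (v j.succ)
  else v j.succ

/-- The spaces of Matui's complex: `G^0` in degree `0`, and `G^(n)` in degree `n ≥ 1`. -/
def MSp : ℕ → Type u
  | 0 => ↥(D.unitSpace)
  | (n + 1) => ↥(D.Comps (n + 1))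

instance [TopologicalSpace G] (n : ℕ) : TopologicalSpace (D.MSp n) := by
  cases n with
  | zero => exact (inferInstance : TopologicalSpace ↥(D.unitSpace))
  | succ n => exact (inferInstance : TopologicalSpace ↥(D.Comps (n + 1)))

/-- The boundary maps of Matui's complex, given by alternating sums of pushforwards
along the face maps (in degree one, `∂₁ = s_* - r_*`). -/
def mBdry : (n : ℕ) → ((D.MSp (n + 1)) → ℤ) → (D.MSp n) → ℤ
  | 0, a => fun u =>
      (∑ᶠ x ∈ {x : ↥(D.Comps 1) | D.source (x.1 0) = u.1}, a x)
        - ∑ᶠ x ∈ {x : ↥(D.Comps 1) | D.range (x.1 0) = u.1}, a x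
  | (n + 1), a => fun y =>
      ∑ i : Fin (n + 3), (-1 : ℤ) ^ (i : ℕ) *
        ∑ᶠ x ∈ {x : ↥(D.Comps (n + 2)) | D.dface (n + 1) i x.1 = y.1}, a x

variable [TopologicalSpace G]

/-- The cycle subgroup of Matui's complex in degree `n`. -/
def mCycles : (n : ℕ) → AddSubgroup ((D.MSp n) → ℤ)
  | 0 => ccZSub (D.MSp 0)
  | (n + 1) => AddSubgroup.closure {a | a ∈ ccZ (D.MSp (n + 1)) ∧ D.mBdry n a = 0}

/-- The boundary subgroup of Matui's complex in degree `n`. -/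
def mBdries (n : ℕ) : AddSubgroup ((D.MSp n) → ℤ) :=
  AddSubgroup.closure {c | ∃ a ∈ ccZ (D.MSp (n + 1)), D.mBdry n a = c}

/-- The groupoid homology `H_n(G)` (Crainic–Moerdijk homology, computed by Matui's complex). -/
def Homology (n : ℕ) : Type u :=
  (D.mCycles n) ⧸ AddSubgroup.comap (D.mCycles n).subtype (D.mBdries n)

instance (n : ℕ) : AddCommGroup (D.Homology n) :=
  QuotientAddGroup.Quotient.addCommGroup _

/-- The homology class of a cycle. -/
def hcls {n : ℕ} (a : (D.MSp n) → ℤ) (ha : a ∈ D.mCycles n) : D.Homology n :=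
  QuotientAddGroup.mk ⟨a, ha⟩

end GroupoidData
namespace GroupoidData

variable {G : Type u} (D : GroupoidData G)

/-! ### The semi-simplicial `G`-space `EG_*` -/

/-- The space `EG_n` of `(n+1)`-tuples of arrows with a common range. -/
def EGset (n : ℕ) : Set (Fin (n + 1) → G) :=
  {g | ∀ i j, D.range (g i) = D.range (g j)}

/-- The face maps of `EG_*` delete one entry of a tuple. -/
def egFace (n : ℕ) (i : Fin (n + 2)) (x : D.EGset (n + 1)) : D.EGset n :=
  ⟨fun j => x.1 (i.succAbove j), fun j k => x.2 (i.succAbove j) (i.succAbove k)⟩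

/-- The boundary map `∂ = ∑ (-1)^i (∂^i)_*` on `ℤ[EG_*]`. -/
def egBdry [TopologicalSpace G] (n : ℕ) (a : D.EGset (n + 1) → ℤ) : D.EGset n → ℤ :=
  fun y => ∑ i : Fin (n + 2), (-1 : ℤ) ^ (i : ℕ) *
    ∑ᶠ x ∈ {x : ↥(D.EGset (n + 1)) | D.egFace n i x = y}, a x

/-- The anchor map of `EG_n`: the common range of the entries of a tuple. -/
def egAnchor (n : ℕ) (x : D.EGset n) : G := D.range (x.1 0)

/-- The (diagonal, left-translation) action of `G` on `EG_n`. -/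
def egTranslate (n : ℕ) (g : G) (x : D.EGset n) : D.EGset n :=
  if h : (fun i => D.mul g (x.1 i)) ∈ D.EGset n then ⟨_, h⟩ else x

/-- The module action `(f·a)(x) = ∑_{g ∈ G^{p(x)}} f(g) a(g⁻¹·x)` of `ℤ[G]` on `ℤ[EG_n]`. -/
def egActFun (n : ℕ) (f : G → ℤ) (a : D.EGset n → ℤ) : D.EGset n → ℤ :=
  fun x => ∑ᶠ g : G,
    if D.range g = D.egAnchor n x then f g * a (D.egTranslate n (D.inv g) x) else 0

/-- The action of the augmentation `ε(f) ∈ ℤ[G⁰]` on `ℤ[EG_n]`. -/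
def egEpsFun (n : ℕ) (f : G → ℤ) (a : D.EGset n → ℤ) : D.EGset n → ℤ :=
  fun x => (∑ᶠ g ∈ {g : G | D.source g = D.egAnchor n x}, f g) * a x

/-- `ℤ[G⁰]`: the compactly supported continuous integer-valued functions on `G` that are
supported on the unit space, as a subgroup of `G → ℤ`. -/
def zUnit [TopologicalSpace G] : AddSubgroup (G → ℤ) where
  carrier := {f | f ∈ ccZ G ∧ ∀ g, f g ≠ 0 → g ∈ D.unitSpace}
  add_mem' {a b} ha hb := ⟨(ccZSub G).add_mem ha.1 hb.1, fun g hg => by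
    by_cases h : a g = 0
    · exact hb.2 g (by simpa [Pi.add_apply, h] using hg)
    · exact ha.2 g h⟩
  zero_mem' := ⟨(ccZSub G).zero_mem, fun g hg => absurd rfl hg⟩
  neg_mem' {a} ha := ⟨(ccZSub G).neg_mem ha.1, fun g hg => ha.2 g (by simpa using hg)⟩

/-- The augmentation map `ε : ℤ[G] → ℤ[G⁰]`, `ε(f)(x) = ∑_{g ∈ G_x} f(g)`. -/
def epsZ [TopologicalSpace G] (f : G → ℤ) : G → ℤ := fun x =>
  if x ∈ D.unitSpace then ∑ᶠ g ∈ {g : G | D.source g = x}, f g else 0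

/-- The convolution product on `ℤ[G]`. -/
def convZ (f f' : G → ℤ) : G → ℤ := fun g =>
  ∑ᶠ h : G, if D.range h = D.range g then f h * f' (D.mul (D.inv h) g) else 0

end GroupoidData
namespace GroupoidData

variable {G : Type u} [TopologicalSpace G] (D : GroupoidData G)

/-- A (left) module over the convolution ring `ℤ[G]`: an abelian group `M` together with an
action of the functions `G → ℤ`, which is biadditive and multiplicative on `ℤ[G]`. -/
structure GMod (M : Type u) [AddCommGroup M] where
  smul : (G → ℤ) → M → M
  smul_add : ∀ f, f ∈ ccZ G → ∀ m m' : M, smul f (m + m') = smul f m + smul f m'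
  add_smul : ∀ f f', f ∈ ccZ G → f' ∈ ccZ G → ∀ m, smul (f + f') m = smul f m + smul f' m
  mul_smul : ∀ f f', f ∈ ccZ G → f' ∈ ccZ G → ∀ m,
    smul (D.convZ f f') m = smul f (smul f' m)

/-- Non-degeneracy of a `ℤ[G]`-module: `ℤ[G]·M = M`. -/
def GMod.Nondeg {D : GroupoidData G} {M : Type u} [AddCommGroup M] (σ : D.GMod M) : Prop :=
  ∀ m : M, ∃ (k : ℕ) (f : Fin k → (G → ℤ)) (v : Fin k → M),
    (∀ i, f i ∈ ccZ G) ∧ m = ∑ i, σ.smul (f i) (v i)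

/-- Morphisms of `ℤ[G]`-modules. -/
def IsGModHom {M N : Type u} [AddCommGroup M] [AddCommGroup N]
    (σM : D.GMod M) (σN : D.GMod N) (φ : M → N) : Prop :=
  (∀ a b, φ (a + b) = φ a + φ b) ∧
    ∀ f, f ∈ ccZ G → ∀ m, φ (σM.smul f m) = σN.smul f (φ m)

/-- A non-degenerate `ℤ[G]`-module is projective if every morphism from it to a quotient of
non-degenerate modules lifts. -/
def IsProjGMod (P : Type u) [AddCommGroup P] (σP : D.GMod P) : Prop :=
  ∀ (M N : Type u) (_ : AddCommGroup M) (_ : AddCommGroup N)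
    (σM : D.GMod M) (σN : D.GMod N), σM.Nondeg → σN.Nondeg →
    ∀ π : M → N, D.IsGModHom σM σN π → Function.Surjective π →
      ∀ φ : P → N, D.IsGModHom σP σN φ →
        ∃ ψ : P → M, D.IsGModHom σP σM ψ ∧ π ∘ ψ = φ

/-- The subgroup of a `ℤ[G]`-module generated by the elements `f·m - ε(f)·m`. -/
def GMod.coinvRel {D : GroupoidData G} {M : Type u} [AddCommGroup M] (σ : D.GMod M) :
    AddSubgroup M :=
  AddSubgroup.closure {z | ∃ f m, f ∈ ccZ G ∧ z = σ.smul f m - σ.smul (D.epsZ f) m}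

/-- The coinvariants `M_G = M / ⟨f·m - ε(f)·m⟩` of a `ℤ[G]`-module. -/
def GMod.Coinv {D : GroupoidData G} {M : Type u} [AddCommGroup M] (σ : D.GMod M) : Type u :=
  M ⧸ σ.coinvRel

instance {D : GroupoidData G} {M : Type u} [AddCommGroup M] (σ : D.GMod M) :
    AddCommGroup σ.Coinv :=
  QuotientAddGroup.Quotient.addCommGroup _

/-- The class of an element of `M` in the coinvariants `M_G`. -/
def GMod.coinvCls {D : GroupoidData G} {M : Type u} [AddCommGroup M] (σ : D.GMod M) (m : M) :
    σ.Coinv :=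
  QuotientAddGroup.mk m

/-- The right action `a·f := ε(af)` of `ℤ[G]` on `ℤ[G⁰]`. -/
def ractZ (a f : G → ℤ) : G → ℤ := fun x =>
  if x ∈ D.unitSpace then ∑ᶠ g ∈ {g : G | D.source g = x}, a (D.range g) * f g else 0

/-- Packaging of a function as an element of `ℤ[G⁰]` (zero if it does not belong to it). -/
def packUnit (f : G → ℤ) : ↥(D.zUnit) := if h : f ∈ D.zUnit then ⟨f, h⟩ else 0

/-- Packaging of a function as an element of `ℤ[Y]` (zero if it does not belong to it). -/
def packCc (Y : Type v) [TopologicalSpace Y] (f : Y → ℤ) : ↥(ccZSub Y) :=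
  if h : f ∈ ccZSub Y then ⟨f, h⟩ else 0

/-- The relations defining the balanced tensor product `ℤ[G⁰] ⊗_{ℤ[G]} M`. -/
def torRel {M : Type u} [AddCommGroup M] (σ : D.GMod M) :
    AddSubgroup (TensorProduct ℤ ↥(D.zUnit) M) :=
  AddSubgroup.closure {z | ∃ (a : ↥(D.zUnit)) (f : G → ℤ) (m : M), f ∈ ccZ G ∧
    z = D.packUnit (D.ractZ a.1 f) ⊗ₜ[ℤ] m - a ⊗ₜ[ℤ] (σ.smul f m)}

/-- The balanced tensor product `ℤ[G⁰] ⊗_{ℤ[G]} M`. -/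
def TensorCoinv {M : Type u} [AddCommGroup M] (σ : D.GMod M) : Type u :=
  (TensorProduct ℤ ↥(D.zUnit) M) ⧸ D.torRel σ

instance {M : Type u} [AddCommGroup M] (σ : D.GMod M) : AddCommGroup (D.TensorCoinv σ) :=
  QuotientAddGroup.Quotient.addCommGroup _

/-- The class of a tensor in `ℤ[G⁰] ⊗_{ℤ[G]} M`. -/
def tcls {M : Type u} [AddCommGroup M] (σ : D.GMod M)
    (z : TensorProduct ℤ ↥(D.zUnit) M) : D.TensorCoinv σ :=
  QuotientAddGroup.mk z

/-- A module over `ℤ[G⁰]`. -/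
structure UMod (M : Type u) [AddCommGroup M] where
  smul : (G → ℤ) → M → M
  smul_add : ∀ f, f ∈ D.zUnit → ∀ m m' : M, smul f (m + m') = smul f m + smul f m'
  add_smul : ∀ f f', f ∈ D.zUnit → f' ∈ D.zUnit → ∀ m,
    smul (f + f') m = smul f m + smul f' m
  mul_smul : ∀ f f', f ∈ D.zUnit → f' ∈ D.zUnit → ∀ m,
    smul (D.convZ f f') m = smul f (smul f' m)

/-- Non-degeneracy of a `ℤ[G⁰]`-module. -/
def UMod.Nondeg {D : GroupoidData G} {M : Type u} [AddCommGroup M] (σ : D.UMod M) : Prop :=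
  ∀ m : M, ∃ (k : ℕ) (f : Fin k → (G → ℤ)) (v : Fin k → M),
    (∀ i, f i ∈ D.zUnit) ∧ m = ∑ i, σ.smul (f i) (v i)

/-- Morphisms of `ℤ[G⁰]`-modules. -/
def IsUModHom {M N : Type u} [AddCommGroup M] [AddCommGroup N]
    (σM : D.UMod M) (σN : D.UMod N) (φ : M → N) : Prop :=
  (∀ a b, φ (a + b) = φ a + φ b) ∧
    ∀ f, f ∈ D.zUnit → ∀ m, φ (σM.smul f m) = σN.smul f (φ m)

/-- Projectivity of a non-degenerate `ℤ[G⁰]`-module. -/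
def IsProjUMod (P : Type u) [AddCommGroup P] (σP : D.UMod P) : Prop :=
  ∀ (M N : Type u) (_ : AddCommGroup M) (_ : AddCommGroup N)
    (σM : D.UMod M) (σN : D.UMod N), σM.Nondeg → σN.Nondeg →
    ∀ π : M → N, D.IsUModHom σM σN π → Function.Surjective π →
      ∀ φ : P → N, D.IsUModHom σP σN φ →
        ∃ ψ : P → M, D.IsUModHom σP σM ψ ∧ π ∘ ψ = φ

end GroupoidData
namespace GroupoidData

variable {G : Type u} [TopologicalSpace G] (D : GroupoidData G)

open scoped TensorProduct

/-- The relations defining the balanced tensor product `ℤ[G] ⊗_{ℤ[G⁰]} ℤ[EG_n]`, where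
`ℤ[G]` carries the right `ℤ[G⁰]`-action `(fφ)(g) = f(g)φ(s(g))` and `ℤ[EG_n]` the left
`ℤ[G⁰]`-action `(φa)(g_0, …, g_n) = φ(r(g_0)) a(g_0, …, g_n)`. -/
def tensorEGRel (n : ℕ) :
    AddSubgroup (TensorProduct ℤ ↥(ccZSub G) ↥(ccZSub ↥(D.EGset n))) :=
  AddSubgroup.closure
    {z | ∃ (f : ↥(ccZSub G)) (φ : G → ℤ) (a : ↥(ccZSub ↥(D.EGset n))), φ ∈ D.zUnit ∧
      z = GroupoidData.packCc G (fun g => f.1 g * φ (D.source g)) ⊗ₜ[ℤ] a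
          - f ⊗ₜ[ℤ] GroupoidData.packCc ↥(D.EGset n) (fun x => φ (D.range (x.1 0)) * a.1 x)}

/-- The balanced tensor product `ℤ[G] ⊗_{ℤ[G⁰]} ℤ[EG_n]`. -/
def TensorEG (n : ℕ) : Type u :=
  (TensorProduct ℤ ↥(ccZSub G) ↥(ccZSub ↥(D.EGset n))) ⧸ D.tensorEGRel n

instance (n : ℕ) : AddCommGroup (D.TensorEG n) :=
  QuotientAddGroup.Quotient.addCommGroup _

/-- The class of a tensor in `ℤ[G] ⊗_{ℤ[G⁰]} ℤ[EG_n]`. -/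
def tegCls (n : ℕ) (z : TensorProduct ℤ ↥(ccZSub G) ↥(ccZSub ↥(D.EGset n))) :
    D.TensorEG n :=
  QuotientAddGroup.mk z

/-- The relations defining the balanced tensor product `ℤ[G] ⊗_{ℤ[G⁰]} ℤ[G⁰]`
(the case `n = -1`, with `EG_{-1} := G⁰`). -/
def tensorBaseRel : AddSubgroup (TensorProduct ℤ ↥(ccZSub G) ↥(D.zUnit)) :=
  AddSubgroup.closure
    {z | ∃ (f : ↥(ccZSub G)) (φ : G → ℤ) (a : ↥(D.zUnit)), φ ∈ D.zUnit ∧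
      z = GroupoidData.packCc G (fun g => f.1 g * φ (D.source g)) ⊗ₜ[ℤ] a
          - f ⊗ₜ[ℤ] D.packUnit (fun x => φ x * a.1 x)}

/-- The balanced tensor product `ℤ[G] ⊗_{ℤ[G⁰]} ℤ[G⁰]`. -/
def TensorBase : Type u :=
  (TensorProduct ℤ ↥(ccZSub G) ↥(D.zUnit)) ⧸ D.tensorBaseRel

instance : AddCommGroup D.TensorBase := QuotientAddGroup.Quotient.addCommGroup _

def tbCls (z : TensorProduct ℤ ↥(ccZSub G) ↥(D.zUnit)) : D.TensorBase :=
  QuotientAddGroup.mk z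

end GroupoidData

namespace TensorIsoAux

open scoped TensorProduct Topology

/-- localization principle for compactly supported functions -/
lemma ccZ_induction {Y : Type v} [TopologicalSpace Y] (P : (Y → ℤ) → Prop)
    (h0 : P 0)
    (hadd : ∀ F F', F ∈ ccZ Y → F' ∈ ccZ Y → P F → P F' → P (F + F'))
    (hloc : ∀ y : Y, ∃ L : Set Y, IsClopen L ∧ y ∈ L ∧
      ∀ F, F ∈ ccZ Y → (∀ y, F y ≠ 0 → y ∈ L) → P F)
    (F : Y → ℤ) (hF : F ∈ ccZ Y) : P F := by
  have key : ∃ L : Set Y, IsClopen L ∧ tsupport F ⊆ L ∧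
      ∀ F, F ∈ ccZ Y → (∀ y, F y ≠ 0 → y ∈ L) → P F := by
    refine IsCompact.induction_on (p := fun s => ∃ L : Set Y, IsClopen L ∧ s ⊆ L ∧
      ∀ F, F ∈ ccZ Y → (∀ y, F y ≠ 0 → y ∈ L) → P F) hF.2 ?_ ?_ ?_ ?_
    · refine ⟨∅, isClopen_empty, subset_rfl, fun F _ h => ?_⟩
      have : F = 0 := by
        funext y
        by_contra hy
        exact h y hy
      rw [this]; exact h0
    · rintro s t hst ⟨L, hL, htL, h⟩
      exact ⟨L, hL, hst.trans htL, h⟩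
    · rintro s t ⟨L, hL, hsL, h⟩ ⟨L', hL', htL', h'⟩
      refine ⟨L ∪ L', hL.union hL', union_subset_union hsL htL', fun F hF hFs => ?_⟩
      have hc : ∀ M : Set Y, IsClopen M → M.indicator F ∈ ccZ Y := by
        intro M hM
        refine ⟨hF.1.indicator (by simp [hM.frontier_eq]), ?_⟩
        refine hF.2.mono ?_
        intro y hy
        simp only [mem_support, ne_eq, indicator_apply_eq_zero, not_forall] at hy ⊢
        exact hy.2
      have e : F = L.indicator F + Lᶜ.indicator F := (indicator_self_add_compl L F).symm
      rw [e]
      refine hadd _ _ (hc L hL) (hc _ hL.compl) (h _ (hc L hL) ?_) (h' _ (hc _ hL.compl) ?_)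
      · intro y hy
        by_contra hn
        exact hy (indicator_of_notMem hn _)
      · intro y hy
        have h1 : y ∈ Lᶜ := by
          by_contra hn
          exact hy (indicator_of_notMem hn _)
        rw [indicator_of_mem h1] at hy
        exact (hFs y hy).resolve_left h1
    · intro y _
      obtain ⟨L, hL, hy, h⟩ := hloc y
      exact ⟨L, mem_nhdsWithin_of_mem_nhds (hL.isOpen.mem_nhds hy), L, hL, subset_rfl, h⟩
  obtain ⟨L, _, hsub, h⟩ := key
  exact h F hF fun y hy => hsub (subset_tsupport F hy)

lemma ccZ_mul {Y : Type v} [TopologicalSpace Y] {f g : Y → ℤ} (hf : f ∈ ccZ Y)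
    (hg : Continuous g) : (fun y => f y * g y) ∈ ccZ Y :=
  ⟨hf.1.mul hg, hf.2.mul_right (f' := g)⟩

lemma ccZ_mul' {Y : Type v} [TopologicalSpace Y] {f g : Y → ℤ} (hf : f ∈ ccZ Y)
    (hg : Continuous g) : (fun y => g y * f y) ∈ ccZ Y :=
  ⟨hg.mul hf.1, HasCompactSupport.mul_left (f := g) hf.2⟩

/-- pushing forward along a map that is injective on a clopen set -/
lemma exists_push {A : Type v} {X : Type w} [TopologicalSpace A] [TopologicalSpace X] [T2Space X]
    (t : A → X) (ht : Continuous t) (hto : IsOpenMap t) (K : Set A) (hK : IsClopen K)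
    (hinj : InjOn t K) (f : A → ℤ) (hf : f ∈ ccZ A) :
    ∃ φ : X → ℤ, φ ∈ ccZ X ∧ (∀ g ∈ K, φ (t g) = f g) ∧
      (∀ x, φ x ≠ 0 → ∃ g ∈ K, t g = x) := by
  let φ : X → ℤ := fun x => if h : ∃ g ∈ K, t g = x then f h.choose else 0
  have h1 : ∀ g ∈ K, φ (t g) = f g := by
    intro g hg
    have h : ∃ g' ∈ K, t g' = t g := ⟨g, hg, rfl⟩
    have : φ (t g) = f h.choose := dif_pos h
    rw [this, hinj h.choose_spec.1 hg h.choose_spec.2]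
  have h2 : ∀ x, φ x ≠ 0 → ∃ g ∈ K, t g = x := by
    intro x hx
    by_contra hn
    exact hx (dif_neg hn)
  have hpre : ∀ S : Set ℤ, (0 : ℤ) ∉ S → φ ⁻¹' S = t '' (K ∩ f ⁻¹' S) := by
    intro S hS
    ext x
    constructor
    · intro hx
      have hx' : φ x ∈ S := hx
      obtain ⟨g, hg, rfl⟩ := h2 x (fun h => hS (h ▸ hx'))
      exact ⟨g, ⟨hg, by rw [mem_preimage, ← h1 g hg]; exact hx⟩, rfl⟩
    · rintro ⟨g, ⟨hg, hgS⟩, rfl⟩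
      rw [mem_preimage, h1 g hg]; exact hgS
  have hcomp : IsCompact (t '' (K ∩ f ⁻¹' {0}ᶜ)) := by
    have : IsCompact (K ∩ f ⁻¹' {0}ᶜ) := by
      refine hf.2.of_isClosed_subset
        (hK.isClosed.inter ((isClosed_discrete _).preimage hf.1)) ?_
      intro y hy
      exact subset_tsupport f hy.2
    exact this.image ht
  refine ⟨φ, ⟨?_, ?_⟩, h1, h2⟩
  · refine continuous_def.2 fun S _ => ?_
    by_cases hS : (0 : ℤ) ∈ S
    · have e : φ ⁻¹' S = (t '' (K ∩ f ⁻¹' {0}ᶜ))ᶜ ∪ t '' (K ∩ f ⁻¹' (S \ {0})) := by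
        rw [← hpre _ (by simp), ← hpre _ (by simp)]
        ext x
        simp only [mem_preimage, mem_union, mem_compl_iff, mem_singleton_iff, mem_sdiff, not_not]
        constructor
        · intro h
          by_cases h0 : φ x = 0
          · exact Or.inl h0
          · exact Or.inr ⟨h, h0⟩
        · rintro (h | h)
          · rw [h]; exact hS
          · exact h.1
      rw [e]
      exact hcomp.isClosed.isOpen_compl.union
        (hto _ (hK.isOpen.inter ((isOpen_discrete _).preimage hf.1)))
    · rw [hpre S hS]
      exact hto _ (hK.isOpen.inter ((isOpen_discrete _).preimage hf.1))
  · refine HasCompactSupport.intro hcomp ?_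
    intro x hx
    rw [← hpre _ (by simp)] at hx
    simpa using hx

lemma indicator_mem_ccZ {Y : Type v} [TopologicalSpace Y] {L : Set Y} (hL : IsClopen L)
    (hc : IsCompact L) : (L.indicator (fun _ => (1 : ℤ))) ∈ ccZ Y := by
  refine ⟨continuous_const.indicator (by simp [hL.frontier_eq]), ?_⟩
  refine HasCompactSupport.intro' hc hL.isClosed ?_
  intro x hx
  exact indicator_of_notMem hx _

/-- projections of fibre products along open maps are open -/
lemma isOpenMap_snd_of_fibre {A X Y Z : Type*} [TopologicalSpace A] [TopologicalSpace X]
    [TopologicalSpace Y] [TopologicalSpace Z] (t : A → X) (p : Y → X) (ht : IsOpenMap t)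
    (hp : Continuous p) (Y0 : Set Y) (hY0 : IsOpen Y0) (α : Z → A) (β : Z → Y)
    (hind : Topology.IsInducing (fun z => (α z, β z)))
    (hr : ∀ g y, (∃ z, α z = g ∧ β z = y) ↔ t g = p y ∧ y ∈ Y0) : IsOpenMap β := by
  intro U hU
  rw [isOpen_iff_mem_nhds]
  rintro _ ⟨z, hz, rfl⟩
  have hzU : U ∈ 𝓝 z := hU.mem_nhds hz
  rw [hind.nhds_eq_comap, Filter.mem_comap] at hzU
  obtain ⟨W, hW, hWU⟩ := hzU
  obtain ⟨B, V, hB, hzB, hV, hzV, hBV⟩ := mem_nhds_prod_iff'.1 hW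
  have hz' := (hr (α z) (β z)).1 ⟨z, rfl, rfl⟩
  have : V ∩ p ⁻¹' (t '' B) ∩ Y0 ∈ 𝓝 (β z) :=
    ((hV.inter ((ht B hB).preimage hp)).inter hY0).mem_nhds
      ⟨⟨hzV, ⟨α z, hzB, hz'.1⟩⟩, hz'.2⟩
  refine Filter.mem_of_superset this ?_
  rintro y ⟨⟨hyV, g, hg, hgy⟩, hy0⟩
  obtain ⟨w, rfl, rfl⟩ := (hr g y).2 ⟨hgy, hy0⟩
  exact ⟨w, hWU (hBV ⟨hg, hyV⟩), rfl⟩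

lemma ccZ_pull {A Y Z : Type*} [TopologicalSpace A] [TopologicalSpace Y] [TopologicalSpace Z]
    (α : Z → A) (β : Z → Y) (hemb : Topology.IsClosedEmbedding (fun z => (α z, β z)))
    {f : A → ℤ} {a : Y → ℤ} (hf : f ∈ ccZ A) (ha : a ∈ ccZ Y) :
    (fun z => f (α z) * a (β z)) ∈ ccZ Z := by
  have h1 : (fun q : A × Y => f q.1 * a q.2) ∈ ccZ (A × Y) := by
    refine ⟨(hf.1.comp continuous_fst).mul (ha.1.comp continuous_snd), ?_⟩
    refine HasCompactSupport.intro' (hf.2.prod ha.2)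
      ((isClosed_tsupport f).prod (isClosed_tsupport a)) ?_
    rintro ⟨g, y⟩ hq
    by_contra hne
    have := mul_ne_zero_iff.1 hne
    exact hq ⟨subset_tsupport f this.1, subset_tsupport a this.2⟩
  exact ⟨h1.1.comp hemb.continuous, h1.2.comp_isClosedEmbedding hemb⟩

lemma isClosedEmbedding_of_inv {Z W : Type*} [TopologicalSpace Z] [TopologicalSpace W]
    (E : Z → W) (C : Set W) (hC : IsClosed C) (hE : Continuous E) (hEC : ∀ z, E z ∈ C)
    (I : C → Z) (hI : Continuous I) (h1 : ∀ z, I ⟨E z, hEC z⟩ = z) (h2 : ∀ c, E (I c) = c.1) :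
    Topology.IsClosedEmbedding E := by
  let e : Z ≃ₜ C :=
    { toFun := fun z => ⟨E z, hEC z⟩
      invFun := I
      left_inv := h1
      right_inv := fun c => Subtype.ext (h2 c)
      continuous_toFun := hE.subtype_mk hEC
      continuous_invFun := hI }
  exact hC.isClosedEmbedding_subtypeVal.comp e.isClosedEmbedding


section General

variable {G : Type u} [TopologicalSpace G] (D : GroupoidData G)

lemma exists_bisection (h : D.IsAmpleGroupoid) (g : G) :
    ∃ B : Set G, IsClopen B ∧ IsCompact B ∧ g ∈ B ∧ InjOn D.source B ∧ InjOn D.range B := by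
  have := h.t2
  obtain ⟨B, hg, _, ho, hc, hb⟩ := h.ample g univ isOpen_univ (mem_univ g)
  exact ⟨B, ⟨hc.isClosed, ho⟩, hc, hg, hb.1, hb.2⟩

lemma exists_one_on (h : D.IsAmpleGroupoid) (K : Set G) (hK : IsCompact K) :
    ∃ F ∈ ccZ G, ∀ g ∈ K, F g = 1 := by
  choose B hB1 hB2 hB3 _ _ using exists_bisection D h
  obtain ⟨t, _, ht⟩ := hK.elim_nhds_subcover B (fun x _ => (hB1 x).isOpen.mem_nhds (hB3 x))
  refine ⟨(⋃ x ∈ t, B x).indicator (fun _ => 1), indicator_mem_ccZ ?_ ?_, ?_⟩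
  · exact t.finite_toSet.isClopen_biUnion (fun x _ => hB1 x)
  · exact t.finite_toSet.isCompact_biUnion (fun x _ => hB2 x)
  · intro g hg
    exact indicator_of_mem (ht hg) _

/-- multiplication by a function, as a linear map on `ℤ[G]` -/
def mulF (F : ccZSub G) : ccZSub G →ₗ[ℤ] ccZSub G :=
  AddMonoidHom.toIntLinearMap
    { toFun := fun f => ⟨fun g => F.1 g * f.1 g, ccZ_mul F.2 f.2.1⟩
      map_zero' := by ext g; simp
      map_add' := fun f f' => by ext g; simp [mul_add] }

@[simp] lemma mulF_coe (F f : ccZSub G) (g : G) : (mulF F f).1 g = F.1 g * f.1 g := rfl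

/-- the comparison map on the tensor product over the integers -/
def phi {Y Z : Type u} [TopologicalSpace Y] [TopologicalSpace Z]
    (N : AddSubgroup (Y → ℤ)) (hN : ∀ a ∈ N, a ∈ ccZ Y) (α : Z → G) (β : Z → Y)
    (hemb : Topology.IsClosedEmbedding (fun z => (α z, β z))) :
    ccZSub G ⊗[ℤ] N →ₗ[ℤ] ccZSub Z :=
  TensorProduct.lift (LinearMap.mk₂ ℤ
    (fun (f : ccZSub G) (a : N) =>
      (⟨fun z => f.1 (α z) * a.1 (β z), ccZ_pull α β hemb f.2 (hN _ a.2)⟩ : ccZSub Z))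
    (fun f f' a => by ext z; simp [add_mul])
    (fun c f a => by ext z; simp [mul_assoc])
    (fun f a a' => by ext z; simp [mul_add])
    (fun c f a => by ext z; simp [mul_left_comm]))

lemma phi_tmul {Y Z : Type u} [TopologicalSpace Y] [TopologicalSpace Z]
    (N : AddSubgroup (Y → ℤ)) (hN : ∀ a ∈ N, a ∈ ccZ Y) (α : Z → G) (β : Z → Y)
    (hemb : Topology.IsClosedEmbedding (fun z => (α z, β z))) (f : ccZSub G) (a : N) :
    (phi N hN α β hemb (f ⊗ₜ a)).1 = fun z => f.1 (α z) * a.1 (β z) := rfl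

lemma phi_mulF {Y Z : Type u} [TopologicalSpace Y] [TopologicalSpace Z]
    (N : AddSubgroup (Y → ℤ)) (hN : ∀ a ∈ N, a ∈ ccZ Y) (α : Z → G) (β : Z → Y)
    (hemb : Topology.IsClosedEmbedding (fun z => (α z, β z))) (F : ccZSub G)
    (x : ccZSub G ⊗[ℤ] N) (z : Z) :
    (phi N hN α β hemb ((mulF F).rTensor N x)).1 z = F.1 (α z) * (phi N hN α β hemb x).1 z := by
  induction x using TensorProduct.induction_on with
  | zero => simp
  | tmul f a =>
    rw [LinearMap.rTensor_tmul, phi_tmul, phi_tmul]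
    simp [mul_assoc]
  | add x y hx hy =>
    rw [map_add, map_add, map_add]
    change _ + _ = F.1 (α z) * (_ + _)
    rw [hx, hy, mul_add]

lemma tensor_support {Y : Type u} (N : AddSubgroup (Y → ℤ)) (x : ccZSub G ⊗[ℤ] N) :
    ∃ K : Set G, IsCompact K ∧ ∀ F : ccZSub G, (∀ g ∈ K, F.1 g = 1) →
      (mulF F).rTensor N x = x := by
  induction x using TensorProduct.induction_on with
  | zero => exact ⟨∅, isCompact_empty, fun F _ => by simp⟩
  | tmul f a =>
    refine ⟨tsupport f.1, f.2.2, fun F hF => ?_⟩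
    rw [LinearMap.rTensor_tmul]
    congr 1
    ext g
    rw [mulF_coe]
    by_cases h : f.1 g = 0
    · rw [h, mul_zero]
    · rw [hF g (subset_tsupport _ h), one_mul]
  | add x y hx hy =>
    obtain ⟨K, hK, h⟩ := hx
    obtain ⟨K', hK', h'⟩ := hy
    refine ⟨K ∪ K', hK.union hK', fun F hF => ?_⟩
    rw [map_add, h F (fun g hg => hF g (Or.inl hg)), h' F (fun g hg => hF g (Or.inr hg))]

/-- the general comparison theorem -/
theorem general_iso (hA : D.IsAmpleGroupoid) {Y Z : Type u} [TopologicalSpace Y]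
    [TopologicalSpace Z] [T2Space Y] (N : AddSubgroup (Y → ℤ)) (Y0 : Set Y) (hY0 : IsOpen Y0)
    (hN : ∀ a, a ∈ N ↔ a ∈ ccZ Y ∧ ∀ y, a y ≠ 0 → y ∈ Y0)
    (p : Y → G) (hp : Continuous p) (α : Z → G) (β : Z → Y)
    (hemb : Topology.IsClosedEmbedding (fun z => (α z, β z)))
    (hr : ∀ g y, (∃ z, α z = g ∧ β z = y) ↔ D.source g = p y ∧ y ∈ Y0)
    (R : AddSubgroup (ccZSub G ⊗[ℤ] N))
    (hR : R = AddSubgroup.closure {z | ∃ (f : ccZSub G) (φ : G → ℤ) (a : N), φ ∈ D.zUnit ∧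
      z = GroupoidData.packCc G (fun g => f.1 g * φ (D.source g)) ⊗ₜ[ℤ] a
          - f ⊗ₜ[ℤ] (if h : (fun x => φ (p x) * a.1 x) ∈ N then (⟨_, h⟩ : N) else 0)}) :
    ∃ e : (ccZSub G ⊗[ℤ] N) ⧸ R ≃+ ccZSub Z,
      ∀ (f : ccZSub G) (a : N), (e (QuotientAddGroup.mk (f ⊗ₜ[ℤ] a))).1 =
        fun z => f.1 (α z) * a.1 (β z) := by
  have := hA.t2
  have hs : Continuous D.source := hA.etale_source.continuous
  have hso : IsOpenMap D.source := hA.etale_source.isOpenMap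
  have hα : Continuous α := continuous_fst.comp hemb.continuous
  have hβ : Continuous β := continuous_snd.comp hemb.continuous
  have hβo : IsOpenMap β :=
    isOpenMap_snd_of_fibre D.source p hso hp Y0 hY0 α β hemb.isInducing hr
  have hz : ∀ z, D.source (α z) = p (β z) ∧ β z ∈ Y0 := fun z => (hr _ _).1 ⟨z, rfl, rfl⟩
  have hN' : ∀ a ∈ N, a ∈ ccZ Y := fun a ha => ((hN a).1 ha).1
  have hfφ : ∀ (f : ccZSub G) (φ : G → ℤ), φ ∈ D.zUnit →
      (fun g => f.1 g * φ (D.source g)) ∈ ccZSub G := fun f φ hφ =>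
    ccZ_mul f.2 (hφ.1.1.comp hs)
  have hφa : ∀ (φ : G → ℤ) (a : N), φ ∈ D.zUnit → (fun x => φ (p x) * a.1 x) ∈ N := by
    intro φ a hφ
    refine (hN _).2 ⟨ccZ_mul' (hN' _ a.2) (hφ.1.1.comp hp), fun y hy => ?_⟩
    exact ((hN _).1 a.2).2 y (mul_ne_zero_iff.1 hy).2
  have hR1 : ∀ (f : ccZSub G) (φ : G → ℤ) (a : N) (hφ : φ ∈ D.zUnit),
      (⟨_, hfφ f φ hφ⟩ : ccZSub G) ⊗ₜ[ℤ] a - f ⊗ₜ[ℤ] (⟨_, hφa φ a hφ⟩ : N) ∈ R := by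
    intro f φ a hφ
    rw [hR]
    refine AddSubgroup.subset_closure ⟨f, φ, a, hφ, ?_⟩
    rw [GroupoidData.packCc, dif_pos (hfφ f φ hφ), dif_pos (hφa φ a hφ)]
  let Φ := phi N hN' α β hemb
  have hΦR : R ≤ Φ.toAddMonoidHom.ker := by
    rw [hR, AddSubgroup.closure_le]
    rintro _ ⟨f, φ, a, hφ, rfl⟩
    rw [GroupoidData.packCc, dif_pos (hfφ f φ hφ), dif_pos (hφa φ a hφ)]
    rw [SetLike.mem_coe, AddMonoidHom.mem_ker]
    rw [LinearMap.toAddMonoidHom_coe, map_sub, sub_eq_zero]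
    apply Subtype.ext
    rw [phi_tmul, phi_tmul]
    funext z
    simp only [(hz z).1]
    ring
  -- injectivity
  have hinj : ∀ x, Φ x = 0 → x ∈ R := by
    intro x hx
    have hP : ∀ F (hF : F ∈ ccZ G), (mulF ⟨F, hF⟩).rTensor N x ∈ R := by
      intro F hF
      refine ccZ_induction (fun F => ∀ hF : F ∈ ccZ G, (mulF ⟨F, hF⟩).rTensor N x ∈ R)
        ?_ ?_ ?_ F hF hF
      · intro h0
        have : mulF ⟨(0 : G → ℤ), h0⟩ = 0 := by
          ext f g
          simp
        rw [this, LinearMap.rTensor_zero]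
        exact R.zero_mem
      · intro F F' hF hF' h h' hs
        have : mulF ⟨F + F', hs⟩ = mulF ⟨F, hF⟩ + mulF ⟨F', hF'⟩ := by
          ext f g
          simp [add_mul]
        rw [this, LinearMap.rTensor_add]
        exact R.add_mem (h hF) (h' hF')
      · intro g
        obtain ⟨L, hL, hLc, hgL, hLs, _⟩ := exists_bisection D hA g
        refine ⟨L, hL, hgL, fun F _ hFL hF => ?_⟩
        let one : ccZSub G := ⟨L.indicator fun _ => 1, indicator_mem_ccZ hL hLc⟩
        have claim : ∀ x : ccZSub G ⊗[ℤ] N, ∃ a : N,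
            (∀ y, a.1 y ≠ 0 → ∃ g ∈ L, D.source g = p y) ∧
            (mulF ⟨F, hF⟩).rTensor N x - one ⊗ₜ[ℤ] a ∈ R := by
          intro x
          induction x using TensorProduct.induction_on with
          | zero => exact ⟨0, fun y hy => absurd rfl hy, by simp [R.zero_mem]⟩
          | tmul f b =>
            obtain ⟨φ, hφ, hφ1, hφ2⟩ := exists_push D.source hs hso L hL hLs _
              (mulF ⟨F, hF⟩ f).2
            have hφu : φ ∈ D.zUnit := by
              refine ⟨hφ, fun x hx => ?_⟩
              obtain ⟨g, _, rfl⟩ := hφ2 x hx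
              exact hA.source_mem g
            refine ⟨⟨_, hφa φ b hφu⟩, fun y hy => hφ2 _ (mul_ne_zero_iff.1 hy).1, ?_⟩
            have := hR1 one φ b hφu
            rw [LinearMap.rTensor_tmul]
            convert this using 3
            ext g
            change _ = L.indicator (fun _ => (1 : ℤ)) g * φ (D.source g)
            by_cases hg : g ∈ L
            · rw [hφ1 g hg, indicator_of_mem hg, one_mul]
            · rw [indicator_of_notMem hg, zero_mul, mulF_coe]
              have : F g = 0 := by
                by_contra h
                exact hg (hFL g h)
              simp [this]
          | add x y hx hy =>
            obtain ⟨a, ha, h⟩ := hx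
            obtain ⟨b, hb, h'⟩ := hy
            refine ⟨a + b, fun y hy => ?_, ?_⟩
            · by_cases h0 : a.1 y = 0
              · refine hb y fun h1 => hy ?_
                change a.1 y + b.1 y = 0
                rw [h0, h1, add_zero]
              · exact ha y h0
            · rw [map_add, TensorProduct.tmul_add, add_sub_add_comm]
              exact R.add_mem h h'
        obtain ⟨a, ha, h⟩ := claim x
        have h1 : Φ (one ⊗ₜ[ℤ] a) = 0 := by
          have h2 : Φ ((mulF ⟨F, hF⟩).rTensor N x) = 0 := by
            apply Subtype.ext
            funext z
            rw [phi_mulF]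
            have : (phi N hN' α β hemb) x = 0 := hx
            rw [this]
            simp
          have h3 : Φ ((mulF ⟨F, hF⟩).rTensor N x - one ⊗ₜ[ℤ] a) = 0 := hΦR h
          rwa [map_sub, h2, zero_sub, neg_eq_zero] at h3
        have ha0 : a = 0 := by
          ext y
          by_contra hy
          obtain ⟨g, hg, hgy⟩ := ha y hy
          obtain ⟨z, rfl, rfl⟩ := (hr g y).2 ⟨hgy, ((hN _).1 a.2).2 y hy⟩
          have h4 := congrFun (congrArg Subtype.val h1) z
          rw [phi_tmul] at h4
          have h5 : one.1 (α z) = 1 := indicator_of_mem hg (fun _ => (1 : ℤ))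
          simp only [h5, one_mul] at h4
          exact hy h4
        rwa [ha0, TensorProduct.tmul_zero, sub_zero] at h
    obtain ⟨K, hK, h⟩ := tensor_support N x
    obtain ⟨F, hF, hF1⟩ := exists_one_on D hA K hK
    have := hP F hF
    rwa [h ⟨F, hF⟩ hF1] at this
  -- surjectivity
  have hsurj : ∀ F (hF : F ∈ ccZ Z), ∃ x, (Φ x).1 = F := by
    intro F hF
    refine ccZ_induction (fun F => ∃ x, (Φ x).1 = F) ⟨0, by simp⟩ ?_ ?_ F hF
    · rintro _ _ _ _ ⟨x, rfl⟩ ⟨y, rfl⟩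
      exact ⟨x + y, by rw [map_add]; rfl⟩
    · intro z
      obtain ⟨L, hL, hLc, hgL, hLs, _⟩ := exists_bisection D hA (α z)
      refine ⟨α ⁻¹' L, hL.preimage hα, hgL, fun F hF hFL => ?_⟩
      have hβi : InjOn β (α ⁻¹' L) := by
        intro z hzL w hwL hzw
        apply hemb.injective
        have : α z = α w := hLs hzL hwL (by rw [(hz z).1, (hz w).1, hzw])
        exact Prod.ext this hzw
      obtain ⟨a, ha, ha1, ha2⟩ := exists_push β hβ hβo _ (hL.preimage hα) hβi F hF
      have haN : a ∈ N := by
        refine (hN a).2 ⟨ha, fun y hy => ?_⟩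
        obtain ⟨w, _, rfl⟩ := ha2 y hy
        exact (hz w).2
      refine ⟨(⟨L.indicator fun _ => 1, indicator_mem_ccZ hL hLc⟩ : ccZSub G) ⊗ₜ[ℤ]
        (⟨a, haN⟩ : N), ?_⟩
      rw [phi_tmul]
      funext w
      change L.indicator (fun _ => (1 : ℤ)) (α w) * a (β w) = F w
      by_cases hw : α w ∈ L
      · rw [indicator_of_mem hw, one_mul, ha1 w hw]
      · rw [indicator_of_notMem hw, zero_mul]
        by_contra h
        exact hw (hFL w (Ne.symm h))
  let Ψ : (ccZSub G ⊗[ℤ] N) ⧸ R →+ ccZSub Z := QuotientAddGroup.lift R Φ.toAddMonoidHom hΦR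
  have hΨ : Function.Bijective Ψ := by
    constructor
    · rw [injective_iff_map_eq_zero]
      intro q
      induction q using QuotientAddGroup.induction_on with
      | H x =>
        intro h
        exact (QuotientAddGroup.eq_zero_iff x).2 (hinj x h)
    · intro F
      obtain ⟨x, hx⟩ := hsurj F.1 F.2
      exact ⟨QuotientAddGroup.mk x, Subtype.ext hx⟩
  exact ⟨AddEquiv.ofBijective Ψ hΨ, fun f a => rfl⟩

end General

section Groupoid

variable {G : Type u} [TopologicalSpace G] (D : GroupoidData G)

lemma mul_inv_cancel' (hA : D.IsAmpleGroupoid) (h g : G) (e : D.range h = D.range g) :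
    D.mul h (D.mul (D.inv h) g) = g := by
  rw [← hA.mul_assoc _ _ _ (hA.range_inv h).symm ((hA.source_inv h).trans e), hA.mul_inv, e,
    hA.unit_mul]

lemma inv_mul_cancel' (hA : D.IsAmpleGroupoid) (h k : G) (e : D.source h = D.range k) :
    D.mul (D.inv h) (D.mul h k) = k := by
  rw [← hA.mul_assoc _ _ _ (hA.source_inv h) e, hA.inv_mul, e, hA.unit_mul]

lemma range_inv_mul (hA : D.IsAmpleGroupoid) (h g : G) (e : D.range h = D.range g) :
    D.range (D.mul (D.inv h) g) = D.source h := by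
  rw [hA.range_mul _ _ ((hA.source_inv h).trans e), hA.range_inv]

lemma translate_inv (hA : D.IsAmpleGroupoid) (h g k : G) (e : D.range h = D.range g)
    (e' : D.range g = D.range k) :
    D.mul (D.inv (D.mul (D.inv h) g)) (D.mul (D.inv h) k) = D.mul (D.inv g) k := by
  have h1 : D.source g = D.range (D.mul (D.inv g) k) := (range_inv_mul D hA g k e').symm
  have h2 : D.source (D.inv h) = D.range g := (hA.source_inv h).trans e
  have h3 : D.mul (D.inv h) k = D.mul (D.mul (D.inv h) g) (D.mul (D.inv g) k) := by
    rw [hA.mul_assoc _ _ _ h2 h1, mul_inv_cancel' D hA g k e']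
  rw [h3, inv_mul_cancel' D hA _ _ ((hA.source_mul _ _ h2).trans h1)]

lemma continuous_mul_comp (hA : D.IsAmpleGroupoid) {X : Type*} [TopologicalSpace X]
    {a b : X → G} (ha : Continuous a) (hb : Continuous b)
    (h : ∀ x, D.source (a x) = D.range (b x)) : Continuous fun x => D.mul (a x) (b x) :=
  hA.continuous_mul.comp ((ha.prodMk hb).subtype_mk h)

lemma conv_mem (hA : D.IsAmpleGroupoid) (f' f : G → ℤ) (hf' : f' ∈ ccZ G) (hf : f ∈ ccZ G) :
    D.convZ f' f ∈ ccZ G := by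
  have := hA.t2
  have hs : Continuous D.source := hA.etale_source.continuous
  have hrc : Continuous D.range := hA.etale_range.continuous
  let Z := {q : G × G // D.range q.1 = D.range q.2}
  have c1 : Continuous fun q : Z => q.1.1 := continuous_fst.comp continuous_subtype_val
  have c2 : Continuous fun q : Z => q.1.2 := continuous_snd.comp continuous_subtype_val
  have ho : IsOpenMap (fun q : Z => q.1.2) :=
    isOpenMap_snd_of_fibre D.range D.range hA.etale_range.isOpenMap hrc univ isOpen_univ
      (fun q : Z => q.1.1) (fun q : Z => q.1.2) Topology.IsInducing.subtypeVal (by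
        intro g y
        constructor
        · rintro ⟨z, rfl, rfl⟩
          exact ⟨z.2, trivial⟩
        · rintro ⟨h, _⟩
          exact ⟨⟨(g, y), h⟩, rfl, rfl⟩)
  have hemb : Topology.IsClosedEmbedding
      (fun q : Z => (q.1.1, D.mul (D.inv q.1.1) q.1.2)) := by
    refine isClosedEmbedding_of_inv _ {w : G × G | D.source w.1 = D.range w.2}
      (isClosed_eq (hs.comp continuous_fst) (hrc.comp continuous_snd))
      (c1.prodMk (continuous_mul_comp D hA (hA.continuous_inv.comp c1) c2
        fun q => (hA.source_inv _).trans q.2))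
      (fun q => (range_inv_mul D hA _ _ q.2).symm)
      (fun w => ⟨(w.1.1, D.mul w.1.1 w.1.2), (hA.range_mul _ _ w.2).symm⟩) ?_ ?_ ?_
    · refine Continuous.subtype_mk ?_ _
      refine (continuous_fst.comp continuous_subtype_val).prodMk hA.continuous_mul
    · intro q
      exact Subtype.ext (Prod.ext rfl (mul_inv_cancel' D hA _ _ q.2))
    · intro w
      exact Prod.ext rfl (inv_mul_cancel' D hA _ _ w.2)
  have key : (∀ x, {h | D.range h = x ∧ f' h ≠ 0}.Finite) ∧ D.convZ f' f ∈ ccZ G := by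
    refine ccZ_induction (fun f' => (∀ x, {h | D.range h = x ∧ f' h ≠ 0}.Finite) ∧
      D.convZ f' f ∈ ccZ G) ?_ ?_ ?_ f' hf'
    · refine ⟨fun x => by simp, ?_⟩
      have : D.convZ 0 f = 0 := by
        funext g
        simp [GroupoidData.convZ]
      rw [this]
      exact (ccZSub G).zero_mem
    · rintro F F' _ _ ⟨h1, h2⟩ ⟨h1', h2'⟩
      refine ⟨fun x => ((h1 x).union (h1' x)).subset ?_, ?_⟩
      · rintro h ⟨hx, hne⟩
        by_cases h0 : F h = 0
        · refine Or.inr ⟨hx, fun h3 => hne ?_⟩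
          simp [h0, h3]
        · exact Or.inl ⟨hx, h0⟩
      · have : D.convZ (F + F') f = D.convZ F f + D.convZ F' f := by
          funext g
          have hfin : ∀ F : G → ℤ, {h | D.range h = D.range g ∧ F h ≠ 0}.Finite →
              (support fun h => if D.range h = D.range g then
                F h * f (D.mul (D.inv h) g) else 0).Finite := by
            intro F hF
            refine hF.subset fun h hh => ?_
            rw [mem_support] at hh
            split_ifs at hh with h3
            · exact ⟨h3, (mul_ne_zero_iff.1 hh).1⟩
            · exact absurd rfl hh
          change _ = D.convZ F f g + D.convZ F' f g
          unfold GroupoidData.convZ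
          rw [← finsum_add_distrib (hfin F (h1 _)) (hfin F' (h1' _))]
          refine finsum_congr fun h => ?_
          split_ifs <;> simp [add_mul]
        rw [this]
        exact (ccZSub G).add_mem h2 h2'
    · intro g
      obtain ⟨L, hL, hLc, hgL, _, hLr⟩ := exists_bisection D hA g
      refine ⟨L, hL, hgL, fun F hF hFL => ⟨fun x => ?_, ?_⟩⟩
      · refine Set.Subsingleton.finite ?_
        rintro h ⟨e, h0⟩ k ⟨e', h0'⟩
        exact hLr (hFL h h0) (hFL k h0') (e.trans e'.symm)
      · obtain ⟨φ, hφ, hφ1, hφ2⟩ := exists_push (fun q : Z => q.1.2) c2 ho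
          ((fun q : Z => q.1.1) ⁻¹' L) (hL.preimage c1) (by
            intro q hq q' hq' e
            refine Subtype.ext (Prod.ext ?_ e)
            refine hLr hq hq' ?_
            rw [q.2, q'.2]
            exact congrArg D.range e) _ (ccZ_pull _ _ hemb hF hf)
        have : D.convZ F f = φ := by
          funext g
          unfold GroupoidData.convZ
          by_cases hex : ∃ h ∈ L, D.range h = D.range g
          · obtain ⟨h, hh, e⟩ := hex
            rw [finsum_eq_single _ h, if_pos e]
            · exact (hφ1 (⟨(h, g), e⟩ : Z) hh).symm
            · intro k hk
              split_ifs with e'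
              · have : F k = 0 := by
                  by_contra h0
                  exact hk (hLr (hFL k h0) hh (e'.trans e.symm))
                rw [this, zero_mul]
              · rfl
          · have h0 : φ g = 0 := by
              by_contra hne
              obtain ⟨q, hq, rfl⟩ := hφ2 g hne
              exact hex ⟨q.1.1, hq, q.2⟩
            rw [h0]
            refine (finsum_congr fun k => ?_).trans finsum_zero
            split_ifs with e'
            · have : F k = 0 := by
                by_contra h0
                exact hex ⟨k, hFL k h0, e'⟩
              rw [this, zero_mul]
            · rfl
        rw [this]
        exact hφ
  exact key.2

lemma translate_val (hA : D.IsAmpleGroupoid) (m : ℕ) (h : G) (x : D.EGset m)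
    (e : D.range h = D.range (x.1 0)) :
    (D.egTranslate m (D.inv h) x).1 = fun i => D.mul (D.inv h) (x.1 i) := by
  unfold GroupoidData.egTranslate
  rw [dif_pos]
  intro i j
  rw [range_inv_mul D hA _ _ (e.trans (x.2 0 i)), range_inv_mul D hA _ _ (e.trans (x.2 0 j))]

lemma act_eq (hA : D.IsAmpleGroupoid) (m : ℕ) (f' f : G → ℤ) (A : D.EGset m → ℤ)
    (hinv : ∀ h x, D.range h = D.range (x.1 0) → A (D.egTranslate m (D.inv h) x) = A x) :
    (fun y : D.EGset m => D.convZ f' f (y.1 0) * A y) =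
      D.egActFun m f' (fun y => f (y.1 0) * A y) := by
  funext x
  unfold GroupoidData.convZ GroupoidData.egActFun GroupoidData.egAnchor
  rw [mul_comm, ← smul_eq_mul, smul_finsum]
  refine finsum_congr fun h => ?_
  split_ifs with e
  · change _ = f' h * (f ((D.egTranslate m (D.inv h) x).1 0) * A (D.egTranslate m (D.inv h) x))
    rw [hinv h x e, translate_val D hA m h x e, smul_eq_mul]
    ring
  · simp

/-- the map `(g_0, …, g_{n+1}) ↦ (g_0⁻¹ g_1, …, g_0⁻¹ g_{n+1})` -/
def egBeta (hA : D.IsAmpleGroupoid) (n : ℕ) (y : D.EGset (n + 1)) : D.EGset n :=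
  ⟨fun i => D.mul (D.inv (y.1 0)) (y.1 i.succ), fun i j => by
    rw [range_inv_mul D hA _ _ (y.2 _ _), range_inv_mul D hA _ _ (y.2 _ _)]⟩

lemma egBeta_emb (hA : D.IsAmpleGroupoid) (n : ℕ) :
    Topology.IsClosedEmbedding
      (fun y : D.EGset (n + 1) => (y.1 0, egBeta D hA n y)) ∧
    ∀ (g : G) (x : D.EGset n), (∃ y : D.EGset (n + 1), y.1 0 = g ∧ egBeta D hA n y = x) ↔
      D.source g = D.range (x.1 0) ∧ x ∈ (univ : Set (D.EGset n)) := by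
  have := hA.t2
  have hs : Continuous D.source := hA.etale_source.continuous
  have hrc : Continuous D.range := hA.etale_range.continuous
  have ev : ∀ (m : ℕ) (i : Fin (m + 1)), Continuous fun y : D.EGset m => y.1 i := fun m i =>
    (continuous_apply i).comp continuous_subtype_val
  let C : Set (G × D.EGset n) := {w | D.source w.1 = D.range (w.2.1 0)}
  have hC : IsClosed C := isClosed_eq (hs.comp continuous_fst)
    (hrc.comp ((ev n 0).comp continuous_snd))
  have hCi : ∀ (w : C) (i : Fin (n + 1)), D.source w.1.1 = D.range (w.1.2.1 i) :=
    fun w i => w.2.trans (w.1.2.2 0 i)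
  let I : C → D.EGset (n + 1) := fun w =>
    ⟨Fin.cons w.1.1 (fun i => D.mul w.1.1 (w.1.2.1 i)), by
      have : ∀ i, D.range ((Fin.cons w.1.1 (fun i => D.mul w.1.1 (w.1.2.1 i)) :
          Fin (n + 2) → G) i) = D.range w.1.1 := by
        intro i
        refine Fin.cases ?_ (fun i => ?_) i
        · rfl
        · exact hA.range_mul _ _ (hCi w i)
      intro i j
      rw [this i, this j]⟩
  have hI2 : ∀ w, ((I w).1 0, egBeta D hA n (I w)) = w.1 := by
    intro w
    refine Prod.ext rfl (Subtype.ext (funext fun i => ?_))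
    exact inv_mul_cancel' D hA _ _ (hCi w i)
  have hEC : ∀ y : D.EGset (n + 1), (y.1 0, egBeta D hA n y) ∈ C := fun y =>
    (range_inv_mul D hA _ _ (y.2 _ _)).symm
  constructor
  · refine isClosedEmbedding_of_inv _ C hC ?_ hEC I ?_ ?_ hI2
    · refine (ev _ 0).prodMk (Continuous.subtype_mk (continuous_pi fun i => ?_) _)
      exact continuous_mul_comp D hA (hA.continuous_inv.comp (ev _ 0)) (ev _ i.succ)
        fun y => (hA.source_inv _).trans (y.2 _ _)
    · refine Continuous.subtype_mk (continuous_pi fun i => ?_) _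
      refine Fin.cases ?_ (fun i => ?_) i
      · exact continuous_fst.comp continuous_subtype_val
      · exact continuous_mul_comp D hA (continuous_fst.comp continuous_subtype_val)
          ((ev n i).comp (continuous_snd.comp continuous_subtype_val)) fun w => hCi w i
    · intro y
      refine Subtype.ext (funext fun i => ?_)
      refine Fin.cases ?_ (fun i => ?_) i
      · rfl
      · exact mul_inv_cancel' D hA _ _ (y.2 _ _)
  · intro g x
    constructor
    · rintro ⟨y, rfl, rfl⟩
      exact ⟨hEC y, trivial⟩
    · rintro ⟨h, _⟩
      have := hI2 ⟨(g, x), h⟩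
      exact ⟨I ⟨(g, x), h⟩, congrArg Prod.fst this, congrArg Prod.snd this⟩

lemma base_emb (hA : D.IsAmpleGroupoid) :
    Topology.IsClosedEmbedding
      (fun y : D.EGset 0 => (y.1 0, D.source (y.1 0))) ∧
    ∀ g x : G, (∃ y : D.EGset 0, y.1 0 = g ∧ D.source (y.1 0) = x) ↔
      D.source g = x ∧ x ∈ D.unitSpace := by
  have := hA.t2
  have hs : Continuous D.source := hA.etale_source.continuous
  have ev : Continuous fun y : D.EGset 0 => y.1 0 :=
    (continuous_apply 0).comp continuous_subtype_val
  constructor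
  · refine isClosedEmbedding_of_inv _ {w : G × G | D.source w.1 = w.2}
      (isClosed_eq (hs.comp continuous_fst) continuous_snd) (ev.prodMk (hs.comp ev))
      (fun _ => rfl) (fun w => ⟨fun _ => w.1.1, fun _ _ => rfl⟩) ?_ ?_ ?_
    · exact Continuous.subtype_mk
        (continuous_pi fun _ => continuous_fst.comp continuous_subtype_val) _
    · intro y
      refine Subtype.ext (funext fun i => ?_)
      change y.1 0 = y.1 i
      rw [Subsingleton.elim (α := Fin 1) i 0]
    · intro w
      exact Prod.ext rfl w.2
  · intro g x
    constructor
    · rintro ⟨y, rfl, rfl⟩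
      exact ⟨rfl, hA.source_mem _⟩
    · rintro ⟨h, _⟩
      exact ⟨⟨fun _ => g, fun _ _ => rfl⟩, rfl, h⟩

end Groupoid

end TensorIsoAux

open scoped TensorProduct in
/-- Let `G` be an ample groupoid.  For every `n ≥ -1` (with the convention `EG_{-1} := G⁰`),
the map `f ⊗ a ↦ ((g_0, …, g_{n+1}) ↦ f(g_0) a(g_0⁻¹g_1, …, g_0⁻¹g_{n+1}))` is a
well-defined isomorphism of left `ℤ[G]`-modules `ℤ[G] ⊗_{ℤ[G⁰]} ℤ[EG_n] ≅ ℤ[EG_{n+1}]`. -/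
theorem tensor_iso_EG
    {G : Type u} [TopologicalSpace G] (D : GroupoidData G)
    (hAmple : D.IsAmpleGroupoid) :
    -- the case `n = -1`:  `ℤ[G] ⊗_{ℤ[G⁰]} ℤ[G⁰] ≅ ℤ[EG_0]`
    (∃ e : D.TensorBase ≃+ ↥(ccZSub ↥(D.EGset 0)),
      (∀ (f : ↥(ccZSub G)) (a : ↥(D.zUnit)),
        ((e (D.tbCls (f ⊗ₜ[ℤ] a)) : ↥(D.EGset 0) → ℤ))
          = fun y => f.1 (y.1 0) * a.1 (D.source (y.1 0))) ∧
      -- `ℤ[G]`-linearity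
      (∀ (f' : G → ℤ), f' ∈ ccZ G → ∀ (f : ↥(ccZSub G)) (a : ↥(D.zUnit)),
        ((e (D.tbCls (GroupoidData.packCc G (D.convZ f' f.1) ⊗ₜ[ℤ] a)) : ↥(D.EGset 0) → ℤ))
          = D.egActFun 0 f' (e (D.tbCls (f ⊗ₜ[ℤ] a))))) ∧
    -- the case of `n ≥ 0`:  `ℤ[G] ⊗_{ℤ[G⁰]} ℤ[EG_n] ≅ ℤ[EG_{n+1}]`
    (∀ n : ℕ, ∃ e : D.TensorEG n ≃+ ↥(ccZSub ↥(D.EGset (n + 1))),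
      (∀ (f : ↥(ccZSub G)) (a : ↥(ccZSub ↥(D.EGset n))),
        ((e (D.tegCls n (f ⊗ₜ[ℤ] a)) : ↥(D.EGset (n + 1)) → ℤ))
          = fun y => f.1 (y.1 0) *
              (if h : (fun i : Fin (n + 1) => D.mul (D.inv (y.1 0)) (y.1 i.succ)) ∈ D.EGset n
                then a.1 ⟨_, h⟩ else 0)) ∧
      (∀ (f' : G → ℤ), f' ∈ ccZ G → ∀ (f : ↥(ccZSub G)) (a : ↥(ccZSub ↥(D.EGset n))),
        ((e (D.tegCls n (GroupoidData.packCc G (D.convZ f' f.1) ⊗ₜ[ℤ] a)) : ↥(D.EGset (n + 1)) → ℤ))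
          = D.egActFun (n + 1) f' (e (D.tegCls n (f ⊗ₜ[ℤ] a))))) := by
  have := hAmple.t2
  have hrc : Continuous D.range := hAmple.etale_range.continuous
  have hpack : ∀ (f' : G → ℤ), f' ∈ ccZ G → ∀ (f : ↥(ccZSub G)),
      (GroupoidData.packCc G (D.convZ f' f.1)).1 = D.convZ f' f.1 := by
    intro f' hf' f
    have h : D.convZ f' f.1 ∈ ccZSub G := TensorIsoAux.conv_mem D hAmple f' f.1 hf' f.2
    rw [GroupoidData.packCc, dif_pos h]
  constructor
  · obtain ⟨hemb, hr⟩ := TensorIsoAux.base_emb D hAmple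
    obtain ⟨e, he'⟩ : ∃ e : D.TensorBase ≃+ ↥(ccZSub ↥(D.EGset 0)),
        ∀ (f : ↥(ccZSub G)) (a : ↥(D.zUnit)),
          ((e (D.tbCls (f ⊗ₜ[ℤ] a)) : ↥(D.EGset 0) → ℤ))
            = fun y => f.1 (y.1 0) * a.1 (D.source (y.1 0)) :=
      TensorIsoAux.general_iso D hAmple D.zUnit D.unitSpace
      hAmple.open_unitSpace (fun a => Iff.rfl) (fun x => x) continuous_id _ _ hemb hr
      D.tensorBaseRel rfl
    refine ⟨e, he', fun f' hf' f a => ?_⟩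
    refine (he' _ _).trans ?_
    rw [he' f a, hpack f' hf' f]
    refine TensorIsoAux.act_eq D hAmple 0 f' f.1 (fun y => a.1 (D.source (y.1 0))) ?_
    intro h x hx
    simp only [TensorIsoAux.translate_val D hAmple 0 h x hx]
    rw [hAmple.source_mul _ _ ((hAmple.source_inv h).trans hx)]
  · intro n
    obtain ⟨hemb, hr⟩ := TensorIsoAux.egBeta_emb D hAmple n
    obtain ⟨e, he'⟩ : ∃ e : D.TensorEG n ≃+ ↥(ccZSub ↥(D.EGset (n + 1))),
        ∀ (f : ↥(ccZSub G)) (a : ↥(ccZSub ↥(D.EGset n))),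
          ((e (D.tegCls n (f ⊗ₜ[ℤ] a)) : ↥(D.EGset (n + 1)) → ℤ))
            = fun y => f.1 (y.1 0) * a.1 (TensorIsoAux.egBeta D hAmple n y) :=
      TensorIsoAux.general_iso D hAmple (ccZSub (D.EGset n)) univ
      isOpen_univ (fun a => ⟨fun h => ⟨h, fun _ _ => trivial⟩, fun h => h.1⟩)
      (fun x => D.range (x.1 0))
      (hrc.comp ((continuous_apply 0).comp continuous_subtype_val)) _ _ hemb hr
      (D.tensorEGRel n) rfl
    refine ⟨e, fun f a => ?_, fun f' hf' f a => ?_⟩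
    · refine (he' f a).trans ?_
      funext y
      have hm : (fun i : Fin (n + 1) => D.mul (D.inv (y.1 0)) (y.1 i.succ)) ∈ D.EGset n :=
        (TensorIsoAux.egBeta D hAmple n y).2
      rw [dif_pos hm]
      rfl
    · refine (he' _ _).trans ?_
      rw [he' f a, hpack f' hf' f]
      refine TensorIsoAux.act_eq D hAmple (n + 1) f' f.1
        (fun y => a.1 (TensorIsoAux.egBeta D hAmple n y)) ?_
      intro h x hx
      refine congrArg a.1 (Subtype.ext (funext fun i => ?_))
      change D.mul (D.inv ((D.egTranslate (n + 1) (D.inv h) x).1 0))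
        ((D.egTranslate (n + 1) (D.inv h) x).1 i.succ) = _
      rw [TensorIsoAux.translate_val D hAmple (n + 1) h x hx]
      exact TensorIsoAux.translate_inv D hAmple h _ _ hx (x.2 _ _)
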